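/- Let A be an associative (not necessarily commutative) ring in which 2 is invertible, and let λ, λ' ∈ A satisfy λ·λ' = −λ'·λ. Define maps T_λ, S_μ : A × A → A × A by T_λ(c, c') = (c + λ, c' − (1/2)·λ·c) and S_μ(c, c') = (c, c' + μ). Then T_λ ∘ T_{λ'} = S_{λ'·λ} ∘ T_{λ'} ∘ T_λ; moreover S_μ ∘ T_λ = T_λ ∘ S_μ and S_μ ∘ S_ν = S_ν ∘ S_μ for all λ, μ, ν. -/

import Mathlib

/-- In an associative ring `A` in which `2` is invertible, for
anticommuting elements `λ, λ'` the gauge transformations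
`T_λ(c, c') = (c + λ, c' − ½·λ·c)` and shifts `S_μ(c, c') = (c, c' + μ)` satisfy
`T_λ ∘ T_{λ'} = S_{λ'·λ} ∘ T_{λ'} ∘ T_λ`, `S_μ ∘ T_λ = T_λ ∘ S_μ`, and
`S_μ ∘ S_ν = S_ν ∘ S_μ`. -/
theorem stmt_6 (A : Type*) [Ring A] [Invertible (2 : A)] (lam lam' : A)
    (hanti : lam * lam' = -(lam' * lam)) :
    let T : A → A × A → A × A :=
      fun l p => (p.1 + l, p.2 - ⅟(2 : A) * l * p.1)
    let S : A → A × A → A × A := fun m p => (p.1, p.2 + m)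
    (T lam ∘ T lam' = S (lam' * lam) ∘ T lam' ∘ T lam) ∧
    (∀ l m : A, S m ∘ T l = T l ∘ S m) ∧
    (∀ m n : A, S m ∘ S n = S n ∘ S m) := by
  intro T S
  refine ⟨?_, fun l m => ?_, fun m n => ?_⟩
  · funext p
    -- By anticommutation, both second components exceed `c' - ½λc - ½λ'c` by half of `λ'λ`, since
    -- `-½λλ' = ½λ'λ = -½λ'λ + λ'λ`; the last equality is where the halves must add up to one.
    have half : lam' * lam = ⅟(2 : A) * (lam' * lam) + ⅟(2 : A) * (lam' * lam) := by
      rw [← mul_add, ← two_mul, invOf_mul_cancel_left']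
    refine Prod.ext (add_right_comm _ _ _) ?_
    change p.2 - ⅟(2 : A) * lam' * p.1 - ⅟(2 : A) * lam * (p.1 + lam') =
      p.2 - ⅟(2 : A) * lam * p.1 - ⅟(2 : A) * lam' * (p.1 + lam) + lam' * lam
    rw [mul_add, mul_add, mul_assoc _ lam lam', hanti, mul_assoc _ lam' lam, mul_neg]
    nth_rewrite 3 [half]
    abel
  · funext p
    exact Prod.ext rfl (sub_add_eq_add_sub _ _ _)
  · funext p
    exact Prod.ext rfl (add_right_comm _ _ _)
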